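/- Let B be a quaternion division algebra over F and let Π ∈ B satisfy Π² = −π₀·1. Let u ∈ O_F^× be a unit such that the polynomial X² − X − u has no root modulo π₀ (i.e. for every c ∈ O_F, π₀ does not divide c² − c − u). Then there exists γ ∈ B with γ² − γ = u·1 and Π·γ = (1 − γ)·Π; equivalently, the element δ = 2γ − 1 satisfies δ² = (1 + 4u)·1 and δ·Π = −Π·δ. (This realizes an embedding of the unramified quadratic extension F^(2) = F(δ) into B on which conjugation by Π acts as the nontrivial Galois automorphism.) -/

import Mathlib

set_option synthInstance.maxHeartbeats 1000000
set_option maxHeartbeats 2000000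

/-!
Conjugation by `ϖ` on `B` has order two, so there is `j ≠ 0` anticommuting with `ϖ`. As `ϖ` and `j`
generate `B` and both commute with `j²`, the square `j² = b` lies in `F`. All elements `(x + y ϖ) j`
anticommute with `ϖ` as well, and the square of such an element is `b (x² + π y²)`. It therefore
suffices to represent `1 + 4 u` by `b (x² + π y²)`. Since the residue field is perfect of
characteristic two, every unit is a value of `x² + π y²` modulo `4`; thus `b (x² + π y²)` takes a
value `1 + 4 c`. As the Artin–Schreier map has index two on the residue field, Hensel's lemma shows
that `1 + 4 c` is either a square or `1 + 4 u` times a square. The first case would give an element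
anticommuting with `ϖ` whose square is `1`, that is `±1`, which is absurd.
-/

open IsLocalRing

/-- The Artin–Schreier endomorphism `x ↦ x ^ p - x` of the additive group of a ring of
characteristic `p`. -/
def artinSchreier (k : Type*) [CommRing k] (p : ℕ) [ExpChar k p] : k →+ k :=
  (frobenius k p : k →+ k) - AddMonoidHom.id k

theorem artinSchreier_apply {k : Type*} [CommRing k] (p : ℕ) [ExpChar k p] (x : k) :
    artinSchreier k p x = x ^ p - x := rfl

theorem index_range_artinSchreier (k : Type*) [Field k] [Finite k] (p : ℕ) [Fact p.Prime]
    [CharP k p] : (artinSchreier k p).range.index = p := by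
  have hker : (artinSchreier k p).ker = (⊥ : Subfield k).toAddSubgroup := by
    ext x
    rw [AddMonoidHom.mem_ker, artinSchreier_apply, sub_eq_zero]
    exact (Subfield.mem_bot_iff_pow_eq_self k p).symm
  have hcard : Nat.card (artinSchreier k p).ker = p := by
    rw [hker]; exact Subfield.card_bot k p
  have hmul := (artinSchreier k p).ker.card_mul_index
  rw [AddSubgroup.index_ker, hcard, ← (artinSchreier k p).range.card_mul_index, mul_comm] at hmul
  exact (Nat.eq_of_mul_eq_mul_left Nat.card_pos hmul).symm

theorem exists_sq_sub_self_eq_sub {k : Type*} [Field k] [Finite k] [CharP k 2] {a b : k}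
    (ha : ∀ z, z ^ 2 - z ≠ a) (hb : ∀ z, z ^ 2 - z ≠ b) : ∃ z, z ^ 2 - z = a - b := by
  have hmem : a + -b ∈ (artinSchreier k 2).range := by
    rw [AddSubgroup.add_mem_iff_of_index_two (index_range_artinSchreier k 2), neg_mem_iff]
    exact iff_of_false (fun ⟨z, hz⟩ => ha z hz) (fun ⟨z, hz⟩ => hb z hz)
  rwa [← sub_eq_add_neg] at hmem

section Approximation

variable {R : Type*} [CommRing R]

theorem exists_pow_dvd_sq_add_mul_sq_sub {π : R} (hsq : ∀ a, ∃ d, π ∣ d ^ 2 - a) {e : ℕ}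
    (he : π ^ e ∣ 2) (v : R) : ∃ x y, π ^ (2 * e) ∣ x ^ 2 + π * y ^ 2 - v := by
  suffices ∀ m ≤ e, ∃ x y, π ^ (2 * m) ∣ x ^ 2 + π * y ^ 2 - v from this e le_rfl
  intro m hm
  induction m with
  | zero => exact ⟨0, 0, by simp⟩
  | succ m ih =>
    obtain ⟨x, y, c, hc⟩ := ih (Nat.le_of_succ_le hm)
    obtain ⟨w, hw⟩ := (pow_dvd_pow π hm).trans he
    -- `d` corrects the coefficient of `π ^ (2 * m)` and `d'` that of `π ^ (2 * m + 1)`; the cross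
    -- terms of the two squares are of higher order because `π ^ (m + 1)` divides `2`.
    obtain ⟨d, t, hd⟩ := hsq (-c)
    obtain ⟨d', t', hd'⟩ := hsq (-(t + w * x * d))
    refine ⟨x + π ^ m * d, y + π ^ m * d', t' + w * y * d', ?_⟩
    linear_combination hc + π ^ (2 * m) * hd + π ^ (2 * m + 1) * hd' +
      (π ^ m * x * d + π ^ (m + 1) * y * d') * hw

end Approximation

section LocalRing

variable {R : Type*} [CommRing R]

theorem residue_two_eq_zero [IsLocalRing R] [CharP (ResidueField R) 2] : residue R 2 = 0 := by
  rw [map_ofNat, CharTwo.two_eq_zero]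

theorem exists_sq_sub_mem_maximalIdeal [IsLocalRing R] [Finite (ResidueField R)]
    [CharP (ResidueField R) 2] (a : R) : ∃ d, d ^ 2 - a ∈ maximalIdeal R := by
  obtain ⟨z, hz⟩ := FiniteField.isSquare_of_char_two (ringChar.eq _ 2) (residue R a)
  obtain ⟨d, rfl⟩ := residue_surjective z
  exact ⟨d, (residue_eq_zero_iff _).1 (by simp [hz, sq])⟩

variable [HenselianLocalRing R] [CharP (ResidueField R) 2]

open Polynomial in
theorem exists_sq_sub_self_eq {c : R} {z : ResidueField R} (hz : z ^ 2 - z = residue R c) :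
    ∃ r : R, r ^ 2 - r = c := by
  obtain ⟨a, ha, -⟩ := ((HenselianLocalRing.TFAE R).out 0 1 rfl rfl).1 ‹_› (X ^ 2 - X - C c)
    (by monicity!) z (by simp [hz]) (by simp [one_add_one_eq_two, residue_two_eq_zero])
  exact ⟨a, by simpa [sub_eq_zero] using ha⟩

theorem exists_isUnit_one_add_four_mul_eq [Finite (ResidueField R)] {u : R}
    (hu : ∀ z, z ^ 2 - z ≠ residue R u) (c : R) :
    ∃ s, IsUnit s ∧ (1 + 4 * c = s ^ 2 ∨ 1 + 4 * c = (1 + 4 * u) * s ^ 2) := by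
  have hunit (t : R) : IsUnit (1 + 2 * t) := by
    rw [← residue_ne_zero_iff_isUnit]
    simp [residue_two_eq_zero]
  have hs (r : R) : IsUnit (2 * r - 1) := by
    rw [← residue_ne_zero_iff_isUnit]
    simp [residue_two_eq_zero]
  by_cases hc : ∃ z, z ^ 2 - z = residue R c
  · obtain ⟨r, hr⟩ := exists_sq_sub_self_eq hc.choose_spec
    exact ⟨2 * r - 1, hs r, .inl (by linear_combination -4 * hr)⟩
  · obtain ⟨z, hz⟩ := exists_sq_sub_self_eq_sub (not_exists.1 hc) hu
    obtain ⟨v, hv⟩ := (hunit (2 * u)).exists_right_inv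
    have hv' : residue R v = 1 := by
      simpa [residue_two_eq_zero] using congrArg (residue R) hv
    obtain ⟨r, hr⟩ := exists_sq_sub_self_eq (c := (c - u) * v) (z := z) (by simp [hz, hv'])
    refine ⟨2 * r - 1, hs r, .inr ?_⟩
    linear_combination -4 * (1 + 4 * u) * hr - 4 * (c - u) * hv

end LocalRing

section DVR

variable {R : Type*} [CommRing R] [IsDomain R] [IsDiscreteValuationRing R]

theorem exists_four_dvd_sq_add_mul_sq_sub [Finite (ResidueField R)] [CharP (ResidueField R) 2]
    (h2 : (2 : R) ≠ 0) {π : R} (hπ : Irreducible π) (v : R) :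
    ∃ x y, 4 ∣ x ^ 2 + π * y ^ 2 - v := by
  have hsq (a : R) : ∃ d, π ∣ d ^ 2 - a := by
    simpa [hπ.maximalIdeal_eq, Ideal.mem_span_singleton] using exists_sq_sub_mem_maximalIdeal a
  obtain ⟨e, he⟩ := IsDiscreteValuationRing.associated_pow_irreducible h2 hπ
  obtain ⟨x, y, hxy⟩ := exists_pow_dvd_sq_add_mul_sq_sub hsq he.symm.dvd v
  refine ⟨x, y, dvd_trans ?_ hxy⟩
  rw [show (4 : R) = 2 ^ 2 by norm_num, mul_comm, pow_mul]
  exact pow_dvd_pow_of_dvd he.dvd 2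

theorem exists_mul_sq_add_mul_sq_eq_unit {K : Type*} [Field K] [Algebra R K] [IsFractionRing R K]
    {π : R} (hπ : Irreducible π) {b : K} (hb : b ≠ 0) :
    ∃ (x y : K) (w : Rˣ), b * (x ^ 2 + algebraMap R K π * y ^ 2) = algebraMap R K w := by
  have hπ₀ : algebraMap R K π ≠ 0 := by simpa using hπ.ne_zero
  obtain ⟨n, w, rfl⟩ :=
    IsDiscreteValuationRing.exists_units_eq_smul_zpow_of_irreducible hπ hb
  obtain ⟨m, rfl | rfl⟩ := Int.even_or_odd' n
  · refine ⟨algebraMap R K π ^ (-m), 0, w, ?_⟩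
    rw [Units.smul_def, Algebra.smul_def, zpow_mul']
    simp only [zpow_ofNat, zpow_neg, inv_pow, ne_eq, OfNat.ofNat_ne_zero, not_false_eq_true,
      zero_pow, mul_zero, add_zero]
    field_simp
  · refine ⟨0, algebraMap R K π ^ (-m - 1), w, ?_⟩
    rw [Units.smul_def, Algebra.smul_def, zpow_add₀ hπ₀, zpow_sub₀ hπ₀, zpow_mul']
    simp only [zpow_ofNat, pow_one, ne_eq, OfNat.ofNat_ne_zero, not_false_eq_true, zero_pow,
      zpow_neg, zero_add]
    field_simp

theorem exists_isUnit_mul_sq_add_mul_sq_eq [HenselianLocalRing R] [Finite (ResidueField R)]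
    [CharP (ResidueField R) 2] (h2 : (2 : R) ≠ 0) {π u : R} (hπ : Irreducible π)
    (hu : ∀ z, z ^ 2 - z ≠ residue R u) (w : Rˣ) :
    ∃ x y s, IsUnit s ∧
      (w * (x ^ 2 + π * y ^ 2) = s ^ 2 ∨ w * (x ^ 2 + π * y ^ 2) = (1 + 4 * u) * s ^ 2) := by
  obtain ⟨x, y, c, hc⟩ := exists_four_dvd_sq_add_mul_sq_sub h2 hπ (w⁻¹ : Rˣ).val
  obtain ⟨s, hs, h⟩ := exists_isUnit_one_add_four_mul_eq hu (w * c)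
  have hnorm : w * (x ^ 2 + π * y ^ 2) = 1 + 4 * (w * c) := by
    linear_combination w * hc + w.mul_inv
  exact ⟨x, y, s, hs, by rwa [hnorm]⟩

theorem exists_mul_sq_add_mul_sq_eq {K : Type*} [Field K] {a b c d s x₁ y₁ x₂ y₂ : K}
    (h₁ : b * (x₁ ^ 2 + a * y₁ ^ 2) = c) (h₂ : c * (x₂ ^ 2 + a * y₂ ^ 2) = d * s ^ 2)
    (hs : s ≠ 0) : ∃ x y, b * (x ^ 2 + a * y ^ 2) = d := by
  refine ⟨(x₁ * x₂ - a * y₁ * y₂) / s, (x₁ * y₂ + x₂ * y₁) / s, ?_⟩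
  field_simp
  linear_combination (x₂ ^ 2 + a * y₂ ^ 2) * h₁ + h₂

theorem exists_mul_sq_add_mul_sq_eq_one_or [HenselianLocalRing R] [Finite (ResidueField R)]
    [CharP (ResidueField R) 2] (K : Type*) [Field K] [Algebra R K] [IsFractionRing R K]
    (h2 : (2 : R) ≠ 0) {π u : R} (hπ : Irreducible π)
    (hu : ∀ z, z ^ 2 - z ≠ residue R u) {b : K} (hb : b ≠ 0) :
    ∃ x y : K, b * (x ^ 2 + algebraMap R K π * y ^ 2) = 1 ∨
      b * (x ^ 2 + algebraMap R K π * y ^ 2) = 1 + 4 * algebraMap R K u := by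
  obtain ⟨x₁, y₁, w, hw⟩ := exists_mul_sq_add_mul_sq_eq_unit hπ hb
  obtain ⟨x₂, y₂, s, hs, h⟩ := exists_isUnit_mul_sq_add_mul_sq_eq h2 hπ hu w
  have hs₀ : algebraMap R K s ≠ 0 := by simpa using hs.ne_zero
  have exists_norm_eq {d : R} (hd : w * (x₂ ^ 2 + π * y₂ ^ 2) = d * s ^ 2) :
      ∃ x y : K, b * (x ^ 2 + algebraMap R K π * y ^ 2) = algebraMap R K d :=
    exists_mul_sq_add_mul_sq_eq hw (by simpa using congrArg (algebraMap R K) hd) hs₀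
  rcases h with h | h
  · obtain ⟨x, y, hxy⟩ := exists_norm_eq (d := 1) (by rw [h, one_mul])
    exact ⟨x, y, .inl (by simpa using hxy)⟩
  · obtain ⟨x, y, hxy⟩ := exists_norm_eq h
    exact ⟨x, y, .inr (by simpa [map_ofNat] using hxy)⟩

end DVR

section Anticommute

theorem exists_semiconjBy_neg {B : Type*} [Ring B] {ϖ y : B} (hϖ : Commute y (ϖ ^ 2))
    (hy : ¬ Commute y ϖ) : ∃ j ≠ 0, SemiconjBy j ϖ (-ϖ) := by
  refine ⟨y * ϖ - ϖ * y, sub_ne_zero.2 hy, ?_⟩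
  have hsq : y * ϖ * ϖ = ϖ * ϖ * y := by simpa only [sq, mul_assoc] using hϖ.eq
  simp only [SemiconjBy, sub_mul, mul_sub, neg_mul, ← mul_assoc, hsq]
  abel

variable {B : Type*} [DivisionRing B] [NeZero (2 : B)] {ϖ j : B}

theorem eq_zero_of_commute_of_semiconjBy_neg (hϖ : ϖ ≠ 0) (hcomm : Commute j ϖ)
    (hanti : SemiconjBy j ϖ (-ϖ)) : j = 0 := by
  have h : ϖ * j = -(ϖ * j) := by rw [← neg_mul, ← hanti.eq, hcomm.eq]
  have h2 : 2 * (ϖ * j) = 0 := by rw [two_mul, ← eq_neg_iff_add_eq_zero, ← h]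
  simpa [hϖ, two_ne_zero] using h2

theorem eq_zero_of_add_mul_eq_zero (hϖ : ϖ ≠ 0) (hj : j ≠ 0) (hanti : SemiconjBy j ϖ (-ϖ))
    {P Q : B} (hP : Commute P ϖ) (hQ : Commute Q ϖ) (h : P + Q * j = 0) : P = 0 ∧ Q = 0 := by
  have hQj : SemiconjBy (Q * j) ϖ (-ϖ) := SemiconjBy.mul_left hQ.neg_right hanti
  have hP₀ : P = 0 := eq_zero_of_commute_of_semiconjBy_neg hϖ hP <| by
    rw [eq_neg_of_add_eq_zero_left h]
    exact hQj.neg_left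
  exact ⟨hP₀, by simpa [hP₀, hj] using h⟩

variable {F : Type*} [Field F] [Algebra F B]

theorem not_isSquare_of_semiconjBy_neg {c : F} (hϖ : ϖ ≠ 0) (hj : j ≠ 0)
    (hanti : SemiconjBy j ϖ (-ϖ)) (hsq : j ^ 2 = algebraMap F B c) : ¬ IsSquare c := by
  rintro ⟨s, rfl⟩
  have hcomm : Commute j ϖ := by
    rw [← sq, map_pow, (Algebra.commute_algebraMap_right s j).sq_eq_sq_iff_eq_or_eq_neg] at hsq
    rcases hsq with rfl | rfl
    · exact Algebra.commute_algebraMap_left s ϖ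
    · exact (Algebra.commute_algebraMap_left s ϖ).neg_left
  exact hj (eq_zero_of_commute_of_semiconjBy_neg hϖ hcomm hanti)

theorem linearIndependent_one_self_mul (hϖ : ϖ ∉ (algebraMap F B).range) (hj : j ≠ 0)
    (hanti : SemiconjBy j ϖ (-ϖ)) : LinearIndependent F ![1, ϖ, j, ϖ * j] := by
  have hϖ₀ : ϖ ≠ 0 := fun h => hϖ (h ▸ zero_mem _)
  have hpair (c d : F) (h : c • (1 : B) + d • ϖ = 0) : c = 0 ∧ d = 0 := by
    have hd : d = 0 := by
      by_contra hd
      refine hϖ ⟨-(d⁻¹ * c), ?_⟩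
      rw [Algebra.algebraMap_eq_smul_one, neg_smul, mul_smul, neg_eq_iff_add_eq_zero,
        ← inv_smul_smul₀ hd ϖ, ← smul_add, h, smul_zero]
    simpa [hd] using h
  rw [Fintype.linearIndependent_iff]
  intro g hg
  have hcomm (c d : F) : Commute (c • (1 : B) + d • ϖ) ϖ :=
    ((Commute.one_left ϖ).smul_left c).add_left ((Commute.refl ϖ).smul_left d)
  obtain ⟨hP, hQ⟩ := eq_zero_of_add_mul_eq_zero hϖ₀ hj hanti (hcomm (g 0) (g 1))
    (hcomm (g 2) (g 3)) (by
      rw [← hg]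
      simp [Fin.sum_univ_four, add_mul, add_assoc])
  obtain ⟨h₀, h₁⟩ := hpair _ _ hP
  obtain ⟨h₂, h₃⟩ := hpair _ _ hQ
  intro i
  fin_cases i <;> assumption

theorem mem_range_algebraMap_of_commute [Algebra.IsCentral F B] (hdim : Module.finrank F B = 4)
    (hϖ : ϖ ∉ (algebraMap F B).range) (hj : j ≠ 0) (hanti : SemiconjBy j ϖ (-ϖ)) {z : B}
    (hzϖ : Commute z ϖ) (hzj : Commute z j) : z ∈ (algebraMap F B).range := by
  let S := Subalgebra.centralizer F {z}
  have hϖS : ϖ ∈ S := by simpa [S, Subalgebra.mem_centralizer_iff] using hzϖ.eq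
  have hjS : j ∈ S := by simpa [S, Subalgebra.mem_centralizer_iff] using hzj.eq
  have hspan := (linearIndependent_one_self_mul hϖ hj hanti).span_eq_top_of_card_eq_finrank
    (by simp [hdim])
  have hS : ⊤ ≤ Subalgebra.toSubmodule S := by
    rw [← hspan, Submodule.span_le]
    rintro _ ⟨i, rfl⟩
    fin_cases i
    exacts [S.one_mem, hϖS, hjS, S.mul_mem hϖS hjS]
  have hz : z ∈ Subalgebra.center F B := Subalgebra.mem_center_iff.2 fun x =>
    (Subalgebra.mem_centralizer_iff F |>.1 (hS (Submodule.mem_top (x := x))) z rfl).symm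
  exact Algebra.IsCentral.out hz

theorem exists_semiconjBy_neg_sq_mem_range [Algebra.IsCentral F B]
    (hdim : Module.finrank F B = 4) (hϖ : ϖ ∉ (algebraMap F B).range)
    (hsq : ϖ ^ 2 ∈ (algebraMap F B).range) :
    ∃ j ≠ 0, SemiconjBy j ϖ (-ϖ) ∧ j ^ 2 ∈ (algebraMap F B).range := by
  obtain ⟨y, hy⟩ : ∃ y, ¬ Commute y ϖ := by
    by_contra! h
    exact hϖ (Algebra.IsCentral.out (Subalgebra.mem_center_iff.2 h))
  obtain ⟨a, ha⟩ := hsq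
  obtain ⟨j, hj, hanti⟩ :=
    exists_semiconjBy_neg (ha ▸ Algebra.commute_algebraMap_right a y) hy
  refine ⟨j, hj, hanti, mem_range_algebraMap_of_commute hdim hϖ hj hanti ?_ (.pow_self j 2)⟩
  have h : SemiconjBy (j * j) ϖ (- -ϖ) := .mul_left hanti.neg_right hanti
  rwa [neg_neg, ← sq] at h

theorem exists_semiconjBy_neg_sq_eq {B : Type*} [Ring B] [Algebra F B] {ϖ j : B} {a b : F}
    (hϖ : ϖ ^ 2 = algebraMap F B a) (hanti : SemiconjBy j ϖ (-ϖ))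
    (hj : j ^ 2 = algebraMap F B b) (x y : F) :
    ∃ J, SemiconjBy J ϖ (-ϖ) ∧ J ^ 2 = algebraMap F B (b * (x ^ 2 - a * y ^ 2)) := by
  set z : B := algebraMap F B x + algebraMap F B y * ϖ
  set z' : B := algebraMap F B x - algebraMap F B y * ϖ
  have hz : Commute z ϖ := (Algebra.commute_algebraMap_left x ϖ).add_left
    ((Algebra.commute_algebraMap_left y ϖ).mul_left (.refl ϖ))
  have hjz : SemiconjBy j z z' := by
    simpa only [z', sub_eq_add_neg, mul_neg] using
      SemiconjBy.add_right (Algebra.commute_algebraMap_right x j)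
        (SemiconjBy.mul_right (Algebra.commute_algebraMap_right y j) hanti)
  have hzz' : z * z' = algebraMap F B (x ^ 2 - a * y ^ 2) := by
    have hcomm : Commute (algebraMap F B x) (algebraMap F B y * ϖ) :=
      Algebra.commute_algebraMap_left x _
    rw [← hcomm.sq_sub_sq, (Algebra.commute_algebraMap_left y ϖ).mul_pow, hϖ]
    simp only [map_sub, map_pow, map_mul, ← Algebra.commutes]
  refine ⟨z * j, SemiconjBy.mul_left hz.neg_right hanti, ?_⟩
  calc (z * j) ^ 2 = z * (j * z) * j := by noncomm_ring
    _ = z * z' * j ^ 2 := by rw [hjz.eq]; noncomm_ring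
    _ = algebraMap F B (b * (x ^ 2 - a * y ^ 2)) := by rw [hzz', hj, ← map_mul, mul_comm]

end Anticommute


section TwoMulSubOne

variable {B : Type*} [Ring B] [NoZeroDivisors B] [NeZero (2 : B)]

theorem sq_two_mul_sub_one_eq_iff {γ v : B} :
    (2 * γ - 1) ^ 2 = 1 + 4 * v ↔ γ ^ 2 - γ = v := by
  have h4 : (4 : B) ≠ 0 := by
    rw [← two_add_two_eq_four, ← mul_two]
    exact mul_ne_zero two_ne_zero two_ne_zero
  have h : (2 * γ - 1) ^ 2 = 1 + 4 * (γ ^ 2 - γ) := by noncomm_ring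
  rw [h, add_right_inj, mul_right_inj' h4]

theorem semiconjBy_two_mul_sub_one_neg_iff {γ ϖ : B} :
    SemiconjBy (2 * γ - 1) ϖ (-ϖ) ↔ ϖ * γ = (1 - γ) * ϖ := by
  have h : (2 * γ - 1) * ϖ - -ϖ * (2 * γ - 1) = 2 * (ϖ * γ - (1 - γ) * ϖ) := by noncomm_ring
  rw [SemiconjBy, ← sub_eq_zero, h, mul_eq_zero_iff_left two_ne_zero, sub_eq_zero]

end TwoMulSubOne

theorem not_isSquare_algebraMap_of_irreducible {R K : Type*} [CommRing R] [IsIntegrallyClosed R]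
    [Field K] [Algebra R K] [IsFractionRing R K] {q : R} (hq : Irreducible q) :
    ¬ IsSquare (algebraMap R K q) := by
  rintro ⟨s, hs⟩
  obtain ⟨r, rfl⟩ := IsIntegrallyClosed.exists_algebraMap_eq_of_isIntegral_pow
    (R := R) (x := s) two_pos (by rw [sq, ← hs]; exact isIntegral_algebraMap)
  exact hq.not_isSquare ⟨r, IsFractionRing.injective R K (by simpa using hs)⟩

section Completeness

variable {A : Type*} [CommRing A]

theorem isPrecomplete_of_finite (I : Ideal A) (M : Type*) [AddCommGroup M] [Module A M]
    [IsPrecomplete I A] [Module.Finite A M] : IsPrecomplete I M := by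
  rw [← AdicCompletion.of_surjective_iff, ← LinearMap.range_eq_top, eq_top_iff]
  rintro x -
  obtain ⟨t, rfl⟩ := AdicCompletion.ofTensorProduct_surjective_of_finite I M x
  induction t with
  | zero => simp
  | add t₁ t₂ h₁ h₂ => simpa using add_mem h₁ h₂
  | tmul r m =>
    obtain ⟨a, rfl⟩ := AdicCompletion.of_surjective I A r
    exact ⟨a • m, rfl⟩

theorem isPrecomplete_of_pow_le {I J : Ideal A} {M : Type*} [AddCommGroup M] [Module A M]
    [IsPrecomplete I M] (hIJ : I ≤ J) {k : ℕ} (hJI : J ^ k ≤ I) : IsPrecomplete J M := by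
  have hJI' : J ^ (k + 1) ≤ I := (Ideal.pow_le_pow_right k.le_succ).trans hJI
  refine ⟨fun f hf => ?_⟩
  obtain ⟨L, hL⟩ := IsPrecomplete.prec ‹IsPrecomplete I M› (f := fun n => f ((k + 1) * n))
    fun {m n} hmn => (hf (Nat.mul_le_mul_left _ hmn)).mono <|
      Submodule.smul_mono_left (by rw [pow_mul]; exact Ideal.pow_right_mono hJI' m)
  refine ⟨L, fun n => (hf (Nat.le_mul_of_pos_left n k.succ_pos)).trans <| (hL n).mono <|
    Submodule.smul_mono_left (Ideal.pow_right_mono hIJ n)⟩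

variable [IsLocalRing A]

theorem radical_map_maximalIdeal (S : Type*) [CommRing S] [Algebra A S] [Algebra.IsIntegral A S]
    [IsLocalRing S] [IsLocalHom (algebraMap A S)] :
    ((maximalIdeal A).map (algebraMap A S)).radical = maximalIdeal S := by
  refine le_antisymm ?_ ?_
  · exact (maximalIdeal.isMaximal S).isPrime.radical_le_iff.2 (IsLocalRing.map_maximalIdeal_le _)
  · rw [Ideal.radical_eq_sInf]
    refine le_sInf fun P ⟨hP, hPprime⟩ => ?_
    have hcomap : P.comap (algebraMap A S) = maximalIdeal A :=
      ((maximalIdeal.isMaximal A).eq_of_le (hPprime.comap _).ne_top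
        (Ideal.map_le_iff_le_comap.1 hP)).symm
    have : P.IsMaximal := Ideal.isMaximal_of_isIntegral_of_isMaximal_comap P
      (hcomap ▸ maximalIdeal.isMaximal A)
    exact (eq_maximalIdeal this).ge

theorem henselianLocalRing_of_isAdicComplete [IsAdicComplete (maximalIdeal A) A] :
    HenselianLocalRing A where
  is_henselian f hf a₀ h₀ h₁ := HenselianRing.is_henselian f hf a₀ h₀ (h₁.map _)

theorem henselianLocalRing_of_finite [IsNoetherianRing A] [IsAdicComplete (maximalIdeal A) A]
    (S : Type*) [CommRing S] [Algebra A S] [Module.Finite A S] [IsLocalRing S]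
    [IsLocalHom (algebraMap A S)] : HenselianLocalRing S := by
  let I := (maximalIdeal A).map (algebraMap A S)
  have : IsNoetherianRing S := .of_finite A S
  have : IsPrecomplete I S :=
    IsPrecomplete.map_algebraMap_iff.2 (isPrecomplete_of_finite (maximalIdeal A) S)
  obtain ⟨k, hk⟩ := Ideal.exists_pow_le_of_le_radical_of_fg (radical_map_maximalIdeal (A := A) S).ge
    (maximalIdeal S).fg_of_isNoetherianRing
  have : IsPrecomplete (maximalIdeal S) S :=
    isPrecomplete_of_pow_le (IsLocalRing.map_maximalIdeal_le _) hk
  have : IsAdicComplete (maximalIdeal S) S := { }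
  exact henselianLocalRing_of_isAdicComplete

end Completeness

section PadicIntegralClosure

variable {p : ℕ} [Fact p.Prime] {F : Type*} [Field F] [Algebra ℚ_[p] F] [FiniteDimensional ℚ_[p] F]
  [Algebra ℤ_[p] F] [IsScalarTower ℤ_[p] ℚ_[p] F]

instance : Module.Finite ℤ_[p] (integralClosure ℤ_[p] F) :=
  IsIntegralClosure.finite ℤ_[p] ℚ_[p] F _

instance : FaithfulSMul ℤ_[p] (integralClosure ℤ_[p] F) := by
  have : FaithfulSMul ℤ_[p] F := .trans ℤ_[p] ℚ_[p] F
  infer_instance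

instance : IsFractionRing (integralClosure ℤ_[p] F) F :=
  integralClosure.isFractionRing_of_finite_extension ℚ_[p] F

instance : Finite (ResidueField ℤ_[p]) := .of_equiv _ PadicInt.residueField.symm.toEquiv

instance : CharP (ResidueField ℤ_[p]) p :=
  charP_of_injective_ringHom (f := PadicInt.residueField.symm.toRingHom)
    PadicInt.residueField.symm.injective p

variable [IsLocalRing (integralClosure ℤ_[p] F)]

instance : HenselianLocalRing (integralClosure ℤ_[p] F) :=
  henselianLocalRing_of_finite (A := ℤ_[p]) _

instance : IsDiscreteValuationRing (integralClosure ℤ_[p] F) := by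
  have : IsDedekindDomain (integralClosure ℤ_[p] F) :=
    integralClosure.isDedekindDomain ℤ_[p] ℚ_[p] F
  have hfield : ¬ IsField (integralClosure ℤ_[p] F) := fun h =>
    IsDiscreteValuationRing.not_isField ℤ_[p]
      ((Algebra.IsIntegral.isField_iff_isField (FaithfulSMul.algebraMap_injective _ _)).2 h)
  exact ((IsDiscreteValuationRing.TFAE _ hfield).out 2 0).1 this

instance : Finite (ResidueField (integralClosure ℤ_[p] F)) :=
  Module.finite_of_finite (ResidueField ℤ_[p])

instance : CharP (ResidueField (integralClosure ℤ_[p] F)) p :=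
  charP_of_injective_algebraMap (algebraMap (ResidueField ℤ_[p]) _).injective p

end PadicIntegralClosure

section Main

variable {R : Type*} [CommRing R] [IsDomain R] [IsDiscreteValuationRing R]
  {F : Type*} [Field F] [Algebra R F] [IsFractionRing R F]
  {B : Type*} [DivisionRing B] [Algebra F B]

theorem notMem_range_algebraMap_of_sq_eq_neg {π : R} (hπ : Irreducible π) {ϖ : B}
    (hϖ : ϖ ^ 2 = -algebraMap F B (algebraMap R F π)) : ϖ ∉ (algebraMap F B).range := by
  rintro ⟨s, rfl⟩
  have hneg : Irreducible (-π) := (Associated.refl π).neg_left.irreducible_iff.2 hπ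
  refine not_isSquare_algebraMap_of_irreducible (K := F) hneg ⟨s, ?_⟩
  apply (algebraMap F B).injective
  rw [map_neg, map_neg, ← hϖ, map_mul, sq]

theorem exists_semiconjBy_neg_sq_eq_one_add_four_mul [HenselianLocalRing R]
    [Finite (ResidueField R)] [CharP (ResidueField R) 2] [NeZero (2 : B)]
    [Algebra.IsCentral F B] (hdim : Module.finrank F B = 4) {π u : R} (hπ : Irreducible π)
    {ϖ : B} (hϖ : ϖ ^ 2 = -algebraMap F B (algebraMap R F π))
    (hu : ∀ z, z ^ 2 - z ≠ residue R u) :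
    ∃ δ, SemiconjBy δ ϖ (-ϖ) ∧ δ ^ 2 = algebraMap F B (1 + 4 * algebraMap R F u) := by
  have hϖF := notMem_range_algebraMap_of_sq_eq_neg hπ hϖ
  have hϖ₀ : ϖ ≠ 0 := fun h => hϖF (h ▸ zero_mem _)
  rw [← map_neg] at hϖ
  obtain ⟨j, hj, hanti, b, hb⟩ := exists_semiconjBy_neg_sq_mem_range hdim hϖF ⟨_, hϖ.symm⟩
  have hb₀ : b ≠ 0 := by
    rintro rfl
    exact pow_ne_zero 2 hj (by rw [← hb, map_zero])
  have h2 : (2 : R) ≠ 0 := fun h => two_ne_zero (α := B) <| by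
    simpa only [map_ofNat, map_zero] using congrArg (fun r => algebraMap F B (algebraMap R F r)) h
  obtain ⟨x, y, hxy⟩ := exists_mul_sq_add_mul_sq_eq_one_or F h2 hπ hu hb₀
  obtain ⟨δ, hδ, hδsq⟩ := exists_semiconjBy_neg_sq_eq hϖ hanti hb.symm x y
  rw [neg_mul, sub_neg_eq_add] at hδsq
  rcases hxy with h | h <;> rw [h] at hδsq
  · have hδ₀ : δ ≠ 0 := by
      rintro rfl
      simp at hδsq
    exact absurd IsSquare.one (not_isSquare_of_semiconjBy_neg hϖ₀ hδ₀ hδ hδsq)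
  · exact ⟨δ, hδ, hδsq⟩

theorem sq_sub_self_ne_residue {π u : R} (hπ : Irreducible π) (hu : ∀ c, ¬π ∣ c ^ 2 - c - u)
    (z : ResidueField R) : z ^ 2 - z ≠ residue R u := by
  obtain ⟨c, rfl⟩ := residue_surjective z
  rw [← map_pow, ← map_sub, ne_eq, ← sub_eq_zero, ← map_sub, residue_eq_zero_iff,
    hπ.maximalIdeal_eq, Ideal.mem_span_singleton]
  exact hu c

theorem exists_unramified_generator_anticommuting_RP_general [HenselianLocalRing R]
    [Finite (ResidueField R)] [CharP (ResidueField R) 2] [NeZero (2 : F)]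
    [Algebra.IsCentral F B] (hdim : Module.finrank F B = 4) {π u : R} (hπ : Irreducible π)
    {ϖ : B} (hϖ : ϖ ^ 2 = -algebraMap F B (algebraMap R F π))
    (hu : ∀ c, ¬π ∣ c ^ 2 - c - u) :
    ∃ γ : B, γ ^ 2 - γ = algebraMap F B (algebraMap R F u) ∧ ϖ * γ = (1 - γ) * ϖ ∧
      (2 * γ - 1) ^ 2 = algebraMap F B (1 + 4 * algebraMap R F u) ∧
      (2 * γ - 1) * ϖ = -(ϖ * (2 * γ - 1)) := by
  have : NeZero (2 : B) :=
    map_ofNat (algebraMap F B) 2 ▸ NeZero.of_injective (algebraMap F B).injective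
  obtain ⟨δ, hδ, hδsq⟩ :=
    exists_semiconjBy_neg_sq_eq_one_add_four_mul hdim hπ hϖ (sq_sub_self_ne_residue hπ hu)
  obtain ⟨γ, rfl⟩ : ∃ γ, 2 * γ - 1 = δ :=
    ⟨2⁻¹ * (1 + δ), by rw [mul_inv_cancel_left₀ two_ne_zero, add_sub_cancel_left]⟩
  refine ⟨γ, ?_, semiconjBy_two_mul_sub_one_neg_iff.1 hδ, hδsq, by rw [hδ.eq, neg_mul]⟩
  rwa [map_add, map_one, map_mul, map_ofNat, sq_two_mul_sub_one_eq_iff] at hδsq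

end Main

/-- **Embedding the unramified quadratic extension into `B`, anticommuting with `Π`.**
Let `B` be a quaternion division algebra over `F` (a finite extension of `ℚ₂`), and let
`Π ∈ B` (written `ϖ`) satisfy `Π² = −π₀·1` for a uniformizer `π₀` of `O_F`.  Let
`u ∈ O_F^×` be a unit such that `X² − X − u` has no root modulo `π₀`.  Then there exists
`γ ∈ B` with `γ² − γ = u·1` and `Π·γ = (1 − γ)·Π`; equivalently, `δ = 2γ − 1` satisfies
`δ² = (1 + 4u)·1` and `δ·Π = −Π·δ`.  (This realizes an embedding of the unramified
quadratic extension `F⁽²⁾ = F(δ)` into `B` on which conjugation by `Π` acts as the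
nontrivial Galois automorphism.) -/
theorem exists_unramified_generator_anticommuting_RP
    (F : Type*) [Field F] [Algebra ℚ_[2] F] [FiniteDimensional ℚ_[2] F]
    [Algebra ℤ_[2] F] [IsScalarTower ℤ_[2] ℚ_[2] F]
    [IsLocalRing (integralClosure ℤ_[2] F)]
    (π₀ : integralClosure ℤ_[2] F)
    (hπ₀ : IsLocalRing.maximalIdeal (integralClosure ℤ_[2] F) = Ideal.span {π₀})
    (B : Type*) [DivisionRing B] [Algebra F B]
    (hdim : Module.finrank F B = 4)
    (hcenter : Subalgebra.center F B = ⊥)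
    (ϖ : B) (hϖ : ϖ ^ 2 = - algebraMap F B (π₀ : F))
    (u : integralClosure ℤ_[2] F) (hu : IsUnit u)
    (hnoroot : ∀ c : integralClosure ℤ_[2] F, ¬ (π₀ ∣ (c ^ 2 - c - u))) :
    ∃ γ : B,
      γ ^ 2 - γ = algebraMap F B (u : F) ∧
      ϖ * γ = (1 - γ) * ϖ ∧
      (2 * γ - 1) ^ 2 = algebraMap F B (1 + 4 * (u : F)) ∧
      (2 * γ - 1) * ϖ = - (ϖ * (2 * γ - 1)) := by
  have : CharZero F := charZero_of_injective_algebraMap (algebraMap ℚ_[2] F).injective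
  have : Algebra.IsCentral F B := ⟨hcenter.le⟩
  exact exists_unramified_generator_anticommuting_RP_general hdim
    ((IsDiscreteValuationRing.irreducible_iff_uniformizer π₀).2 hπ₀) hϖ hnoroot
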